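/- Let I ⊆ Δ and let Φ' be a subsystem of Φ. Then W_I ∩ W(Φ') = W(Φ_I ∩ Φ'). -/

import Mathlib

open scoped RealInnerProductSpace
open Classical

noncomputable section

namespace JantzenGVM

variable {V : Type*} [NormedAddCommGroup V] [InnerProductSpace ℝ V] [FiniteDimensional ℝ V]

/-- The coroot `α^∨ = 2α/⟨α,α⟩` of a vector `α` (junk value `0` when `α = 0`). -/
def coroot (α : V) : V := (2 / ⟪α, α⟫) • α

/-- The linear functional `v ↦ ⟨v, α^∨⟩`. -/
def corootForm (α : V) : V →ₗ[ℝ] ℝ where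
  toFun v := ⟪v, coroot α⟫
  map_add' x y := by simp [inner_add_left]
  map_smul' c x := by simp [inner_smul_left]

lemma corootForm_self {α : V} (h : ⟪α, α⟫ ≠ 0) : corootForm α α = 2 := by
  simp only [corootForm, coroot, LinearMap.coe_mk, AddHom.coe_mk, real_inner_smul_right]
  field_simp

/-- The reflection `s_α` as a linear automorphism of `V` (the identity when `⟨α,α⟩ = 0`). -/
def reflV (α : V) : V ≃ₗ[ℝ] V :=
  if h : ⟪α, α⟫ = 0 then LinearEquiv.refl ℝ V
  else Module.reflection (corootForm_self h)

/-- `h* = ℂ ⊗ V`, realized as the space of real-linear functionals `V → ℂ` via the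
inner product; an element `λ` pairs with a root `α` by `⟨λ, α⟩ = λ α` and with the
coroot by `⟨λ, α^∨⟩ = λ (coroot α)`. -/
abbrev HStar (V : Type*) [NormedAddCommGroup V] [InnerProductSpace ℝ V] := V →ₗ[ℝ] ℂ

/-- The canonical embedding of `V` into `h*`. -/
def emb (α : V) : HStar V where
  toFun v := (⟪α, v⟫ : ℂ)
  map_add' x y := by simp [inner_add_right]
  map_smul' c x := by simp [inner_smul_right, Complex.real_smul]

/-- The action of a linear automorphism `w` of `V` on `h*`: `(w • λ)(v) = λ(w⁻¹ v)`. -/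
def wAct (w : V ≃ₗ[ℝ] V) (l : HStar V) : HStar V := l ∘ₗ (w.symm : V →ₗ[ℝ] V)

/-- The reflection `s_β λ = λ - ⟨λ, β^∨⟩ β` acting on `h*`. -/
def sRefl (β : V) (l : HStar V) : HStar V := l - l (coroot β) • emb β

/-- The group generated by the reflections in the elements of `Φ'`. -/
def weyl (Φ' : Set V) : Subgroup (V ≃ₗ[ℝ] V) :=
  Subgroup.closure {w | ∃ α ∈ Φ', w = reflV α}

/-- A finite, reduced, crystallographic root system spanning the Euclidean space `V`,
together with a choice of positive system and the corresponding simple system. -/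
structure RootSys (V : Type*) [NormedAddCommGroup V] [InnerProductSpace ℝ V]
    [FiniteDimensional ℝ V] where
  Φ : Finset V
  pos : Finset V
  Δ : Finset V
  ne_zero : ∀ α ∈ Φ, α ≠ (0 : V)
  span_eq_top : Submodule.span ℝ (Φ : Set V) = ⊤
  reduced : ∀ α ∈ Φ, ∀ c : ℝ, c • α ∈ Φ → c = 1 ∨ c = -1
  refl_mem : ∀ α ∈ Φ, ∀ β ∈ Φ, reflV α β ∈ Φ
  crystallographic : ∀ α ∈ Φ, ∀ β ∈ Φ, ∃ n : ℤ, ⟪β, coroot α⟫ = (n : ℝ)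
  pos_subset : pos ⊆ Φ
  mem_pos_or : ∀ α ∈ Φ, α ∈ pos ∨ -α ∈ pos
  not_both : ∀ α ∈ pos, -α ∉ pos
  simple_subset : Δ ⊆ pos
  simple_indep : LinearIndependent ℝ (fun x : {a : V // a ∈ Δ} => x.1)
  simple_gen : ∀ β ∈ pos, ∃ c : V → ℝ, (∀ α ∈ Δ, 0 ≤ c α) ∧ β = ∑ α ∈ Δ, c α • α

/-- A subsystem of the root system: a subset of `Φ` closed under its own reflections. -/
def IsSubsystem (S : RootSys V) (Φ' : Set V) : Prop :=
  Φ' ⊆ (S.Φ : Set V) ∧ ∀ α ∈ Φ', ∀ β ∈ Φ', reflV α β ∈ Φ'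

/-- The length of `w`, i.e. the number of positive roots sent to negative roots
(this equals the Coxeter length for elements of the Weyl group). -/
def len (S : RootSys V) (w : V ≃ₗ[ℝ] V) : ℕ :=
  {β ∈ (S.pos : Set V) | w β ∉ (S.pos : Set V)}.ncard

/-- `Φ_I = ℤI ∩ Φ`, the subsystem generated by a subset `I` of the simple roots. -/
def PhiI (S : RootSys V) (I : Finset V) : Set V :=
  {α ∈ (S.Φ : Set V) | α ∈ Submodule.span ℤ (I : Set V)}

/-- `z` is a positive integer. -/
def IsPosInt (z : ℂ) : Prop := ∃ n : ℤ, 0 < n ∧ z = (n : ℂ)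

/-- `z` is an integer. -/
def IsInt (z : ℂ) : Prop := ∃ n : ℤ, z = (n : ℂ)

/-- `Λ_I⁺ = {λ ∈ h* : ⟨λ, α^∨⟩ ∈ ℤ_{>0} for all α ∈ I}`. -/
def LambdaP (I : Set V) : Set (HStar V) :=
  {l | ∀ α ∈ I, IsPosInt (l (coroot α))}

/-- `Λ⁺(Φ'', Φ') = {ν ∈ ℂΦ' : ⟨ν, α^∨⟩ ∈ ℤ_{>0} for all α ∈ Φ'' ∩ Φ⁺}`. -/
def LambdaPSub (S : RootSys V) (Φ'' Φ' : Set V) : Set (HStar V) :=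
  {l | l ∈ Submodule.span ℂ (emb '' Φ') ∧
       ∀ α ∈ Φ'' ∩ (S.pos : Set V), IsPosInt (l (coroot α))}

/-- `λ` is `Φ''`-regular: `⟨λ, α⟩ ≠ 0` for all `α ∈ Φ''`. -/
def IsRegularOn (Φ'' : Set V) (l : HStar V) : Prop := ∀ α ∈ Φ'', l α ≠ 0

/-- `Ψ⁺(λ, Φ'', Φ') = {β ∈ (Φ' ∩ Φ⁺) \ Φ'' : ⟨λ, β^∨⟩ ∈ ℤ_{>0}}`. -/
def PsiP (S : RootSys V) (Φ'' Φ' : Set V) (l : HStar V) : Set V :=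
  {β | β ∈ Φ' ∩ (S.pos : Set V) ∧ β ∉ Φ'' ∧ IsPosInt (l (coroot β))}

/-- `Ψ⁺⁺(λ, Φ'', Φ') = {β ∈ Ψ⁺(λ, Φ'', Φ') : s_β λ is Φ''-regular}`. -/
def PsiPP (S : RootSys V) (Φ'' Φ' : Set V) (l : HStar V) : Set V :=
  {β ∈ PsiP S Φ'' Φ' l | ∀ α ∈ Φ'', (sRefl β l) α ≠ 0}

/-- The sign function: `sgn(λ, μ) = (-1)^{ℓ(w)}` if `λ, μ` are `Φ''`-regular and
`μ = wλ` for some `w ∈ W(Φ'')`, and `0` otherwise. -/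
def sgnW (S : RootSys V) (Φ'' : Set V) (l m : HStar V) : ℤ :=
  if h : IsRegularOn Φ'' l ∧ IsRegularOn Φ'' m ∧ ∃ w, w ∈ weyl Φ'' ∧ m = wAct w l
  then (-1) ^ len S h.2.2.choose else 0

/-- The Jantzen coefficient `c(λ, μ, Φ'', Φ') = Σ_{β ∈ Ψ⁺⁺(λ,Φ'',Φ')} sgn(s_β λ, μ)`. -/
def jc (S : RootSys V) (Φ'' Φ' : Set V) (l m : HStar V) : ℤ :=
  ∑ᶠ β ∈ PsiPP S Φ'' Φ' l, sgnW S Φ'' (sRefl β l) m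

/-- The symmetrized Jantzen coefficient `c̃(λ, μ, Φ'', Φ')`. -/
def jcSym (S : RootSys V) (Φ'' Φ' : Set V) (l m : HStar V) : ℤ :=
  jc S Φ'' Φ' l m + jc S Φ'' Φ' m l

/-- `θ(λ) = Σ_{w ∈ W_I} (-1)^{ℓ(w)} e^{wλ}` in the free `ℤ`-module on `h*`. -/
def theta (S : RootSys V) (I : Finset V) (l : HStar V) : HStar V →₀ ℤ :=
  ∑ᶠ w ∈ (weyl (PhiI S I) : Set (V ≃ₗ[ℝ] V)),
    Finsupp.single (wAct w l) ((-1) ^ len S w)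

/-- `Φ_λ = {α ∈ Φ : ⟨λ, α⟩ = 0}`. -/
def singSet (S : RootSys V) (l : HStar V) : Set V :=
  {α ∈ (S.Φ : Set V) | l α = 0}

/-- `Φ_{[λ]} = {α ∈ Φ : ⟨λ, α^∨⟩ ∈ ℤ}`. -/
def integralSet (S : RootSys V) (l : HStar V) : Set V :=
  {α ∈ (S.Φ : Set V) | IsInt (l (coroot α))}

/-- `(ℚ A) ∩ Φ`, the intersection of the rational span of `A` with `Φ`.
Taking `A = Φ_I ∪ {β}` gives `Φ_{β,1}`; taking `A = Φ_λ ∪ {β}` gives `Φ_{β,2}`. -/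
def ratSpanRoots (S : RootSys V) (A : Set V) : Set V :=
  {γ ∈ (S.Φ : Set V) | ∃ (t : Finset V) (c : V → ℚ),
    (t : Set V) ⊆ A ∧ γ = ∑ α ∈ t, (c α : ℝ) • α}

/-- `Φ_{β,0}`, the irreducible component of `Φ` containing `β`. -/
def component (S : RootSys V) (β : V) : Set V :=
  {γ ∈ (S.Φ : Set V) |
    Relation.ReflTransGen
      (fun x y => x ∈ (S.Φ : Set V) ∧ y ∈ (S.Φ : Set V) ∧ ⟪x, y⟫ ≠ 0) β γ}

/-- `λ|_{Φ'}`: the unique element of `ℂΦ'` with `⟨λ|_{Φ'}, α^∨⟩ = ⟨λ, α^∨⟩`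
for all `α ∈ Φ'`. -/
def restrictW (Φ' : Set V) (l : HStar V) : HStar V :=
  letI : Nonempty (HStar V) := ⟨0⟩
  Classical.epsilon fun m =>
    m ∈ Submodule.span ℂ (emb '' Φ') ∧ ∀ α ∈ Φ', m (coroot α) = l (coroot α)

/-- `ᴵWᴶ = {w ∈ W : ℓ(uwv) = ℓ(u) + ℓ(w) + ℓ(v) for all u ∈ W_I, v ∈ W_J}`. -/
def doubleCoset (S : RootSys V) (I J : Finset V) : Set (V ≃ₗ[ℝ] V) :=
  {w | w ∈ weyl (S.Φ : Set V) ∧ ∀ u ∈ weyl (PhiI S I), ∀ v ∈ weyl (PhiI S J),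
    len S (u * w * v) = len S u + len S w + len S v}

/-- The fundamental weight `ϖ_j` relative to an enumeration `e` of the simple roots:
the unique element of `h*` with `⟨ϖ_j, α_k^∨⟩ = δ_{jk}`. -/
def fundWeight {n : ℕ} (e : Fin n → V) (j : Fin n) : HStar V :=
  letI : Nonempty (HStar V) := ⟨0⟩
  Classical.epsilon fun m => ∀ k : Fin n, m (coroot (e k)) = if k = j then 1 else 0

/-- The labels of the irreducible Dynkin types. -/
inductive LieType | A | B | C | D | E | F | G
deriving DecidableEq

/-- The Cartan matrix of type `A_n` (1-based indices): entry `(i,j)` is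
`⟨α_i, α_j^∨⟩`. -/
def cartanA (i j : ℕ) : ℤ :=
  if i = j then 2 else if i + 1 = j ∨ j + 1 = i then -1 else 0

/-- The Cartan matrices of the irreducible types in the standard (Bourbaki/Humphreys)
numbering of the Dynkin diagram: `cartanEntry t n i j = ⟨α_i, α_j^∨⟩` (1-based). -/
def cartanEntry : LieType → ℕ → ℕ → ℕ → ℤ
  | .A, _, i, j => cartanA i j
  | .B, n, i, j => if i + 1 = n ∧ j = n then -2 else cartanA i j
  | .C, n, i, j => if i = n ∧ j + 1 = n then -2 else cartanA i j
  | .D, n, i, j =>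
      if i = j then 2
      else if (i + 2 = n ∧ j = n) ∨ (i = n ∧ j + 2 = n) then -1
      else if (i + 1 = n ∧ j = n) ∨ (i = n ∧ j + 1 = n) then 0
      else cartanA i j
  | .E, _, i, j =>
      if i = j then 2
      else if (i = 1 ∧ j = 3) ∨ (i = 3 ∧ j = 1) ∨ (i = 2 ∧ j = 4) ∨ (i = 4 ∧ j = 2) then -1
      else if (i = 1 ∧ j = 2) ∨ (i = 2 ∧ j = 1) ∨ (i = 2 ∧ j = 3) ∨ (i = 3 ∧ j = 2) then 0
      else cartanA i j
  | .F, _, i, j => if i = 2 ∧ j = 3 then -2 else cartanA i j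
  | .G, _, i, j => if i = 2 ∧ j = 1 then -3 else cartanA i j

/-- The standard basis vector `e_k` (1-based index, junk `0` outside `1 ≤ k ≤ n`). -/
def stdE (n k : ℕ) : EuclideanSpace ℝ (Fin n) :=
  if h : 1 ≤ k ∧ k ≤ n then EuclideanSpace.single ⟨k - 1, by omega⟩ 1 else 0

/-- The labels `B`, `C`, `D` of the classical non-`A` types. -/
inductive BCD | B | C | D
deriving DecidableEq

/-- The root set of `B_n` / `C_n` / `D_n` in the standard realization. -/
def bcdRoots (t : BCD) (n : ℕ) : Set (EuclideanSpace ℝ (Fin n)) :=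
  {v | (∃ i j : ℕ, 1 ≤ i ∧ i < j ∧ j ≤ n ∧
          (v = stdE n i - stdE n j ∨ v = -(stdE n i - stdE n j) ∨
           v = stdE n i + stdE n j ∨ v = -(stdE n i + stdE n j))) ∨
       (match t with
        | .B => ∃ i : ℕ, 1 ≤ i ∧ i ≤ n ∧ (v = stdE n i ∨ v = -stdE n i)
        | .C => ∃ i : ℕ, 1 ≤ i ∧ i ≤ n ∧ (v = (2:ℝ) • stdE n i ∨ v = -((2:ℝ) • stdE n i))
        | .D => False)}

/-- The positive roots of `B_n` / `C_n` / `D_n` in the standard realization. -/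
def bcdPos (t : BCD) (n : ℕ) : Set (EuclideanSpace ℝ (Fin n)) :=
  {v | (∃ i j : ℕ, 1 ≤ i ∧ i < j ∧ j ≤ n ∧
          (v = stdE n i - stdE n j ∨ v = stdE n i + stdE n j)) ∨
       (match t with
        | .B => ∃ i : ℕ, 1 ≤ i ∧ i ≤ n ∧ v = stdE n i
        | .C => ∃ i : ℕ, 1 ≤ i ∧ i ≤ n ∧ v = (2:ℝ) • stdE n i
        | .D => False)}

/-- The simple roots of `B_n` / `C_n` / `D_n` in the standard realization. -/
def bcdSimple (t : BCD) (n : ℕ) : Set (EuclideanSpace ℝ (Fin n)) :=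
  {v | (∃ i : ℕ, 1 ≤ i ∧ i < n ∧ v = stdE n i - stdE n (i + 1)) ∨
       (match t with
        | .B => v = stdE n n
        | .C => v = (2:ℝ) • stdE n n
        | .D => v = stdE n (n - 1) + stdE n n)}

/-- The simple root `α_k` of `B_n` / `C_n` / `D_n` (1-based index `k`). -/
def bcdAlpha (t : BCD) (n k : ℕ) : EuclideanSpace ℝ (Fin n) :=
  if k < n then stdE n k - stdE n (k + 1)
  else match t with
  | .B => stdE n n
  | .C => (2:ℝ) • stdE n n
  | .D => stdE n (n - 1) + stdE n n

/-!
`Φ_I` is the zero set in `Φ` of a linear functional `l`, namely one that vanishes on `I` and takes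
the value `1` on `Δ \ I`. It therefore suffices to know that, for a finite set `R` stable under its
own reflections, the stabilizer of `l` in `W(R)` is generated by the reflections it contains, i.e.
is `W({α ∈ R | l α = 0})`: with `R = Φ` and `R = Φ'` both sides of the claim become the stabilizer
of `l` in `W(Φ')`.

For the stabilizer, perturb a large multiple of `l` by a generic functional. This gives a positive
system of `R` on which `l ≥ 0`, and `W(R)` is generated by the reflections in its simple elements.
If a nonempty word `w s_α` in these reflections fixes `l`, then either `w α` is negative, and the
exchange condition shortens the word, or `0 ≤ l (w α) = -l α ≤ 0`, so that `s_α` fixes `l` and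
the last letter can be split off.
-/

/-! ### Cones and functionals -/

section Cone

variable {𝕜 E : Type*} [CommRing 𝕜] [LinearOrder 𝕜] [IsStrictOrderedRing 𝕜] [AddCommGroup E]
  [Module 𝕜 E] {f : Module.Dual 𝕜 E} {T : Set E} {x : E}

lemma apply_nonneg_of_mem_hull (hT : ∀ y ∈ T, 0 ≤ f y) (hx : x ∈ PointedCone.hull 𝕜 T) :
    0 ≤ f x := by
  induction hx using Submodule.span_induction with
  | mem y hy => exact hT y hy
  | zero => exact (map_zero f).ge
  | add y z _ _ hy hz => rw [map_add]; exact add_nonneg hy hz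
  | smul a y _ hy => rw [← Nonneg.coe_smul, map_smul]; exact mul_nonneg a.2 hy

lemma eq_zero_or_apply_pos_of_mem_hull (hT : ∀ y ∈ T, 0 < f y)
    (hx : x ∈ PointedCone.hull 𝕜 T) : x = 0 ∨ 0 < f x := by
  induction hx using Submodule.span_induction with
  | mem y hy => exact .inr (hT y hy)
  | zero => exact .inl rfl
  | add y z _ _ hy hz =>
    rcases hy with rfl | hy
    · simpa using hz
    · refine .inr ?_
      rcases hz with rfl | hz
      · simpa using hy
      · rw [map_add]; exact add_pos hy hz
  | smul a y _ hy =>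
    rcases hy with rfl | hy
    · exact .inl (smul_zero a)
    · rcases a.2.eq_or_lt with ha | ha
      · exact .inl (by rw [← Nonneg.coe_smul, ← ha, zero_smul])
      · exact .inr (by rw [← Nonneg.coe_smul, map_smul]; exact mul_pos ha hy)

end Cone

section Field

variable {𝕜 E : Type*} [Field 𝕜] [LinearOrder 𝕜] [IsStrictOrderedRing 𝕜] [AddCommGroup E]
  [Module 𝕜 E]

lemma eq_zero_of_add_eq_smul_of_notMem_hull {f : Module.Dual 𝕜 E} {T : Set E} {α z z' : E} {k : 𝕜}
    (hT : ∀ y ∈ T, 0 < f y) (hα : 0 ≤ f α) (hα' : α ∉ PointedCone.hull 𝕜 T)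
    (hz : z ∈ PointedCone.hull 𝕜 T) (hz' : z' ∈ PointedCone.hull 𝕜 T) (hsum : z + z' = k • α) :
    z = 0 := by
  have hk : k ≤ 0 := by
    by_contra! h
    have := PointedCone.smul_mem _ (inv_pos.2 h).le (add_mem hz hz')
    rw [hsum, inv_smul_smul₀ h.ne'] at this
    exact hα' this
  have hfsum : f z + f z' = k * f α := by rw [← map_add, hsum, map_smul, smul_eq_mul]
  have hfz' : 0 ≤ f z' := apply_nonneg_of_mem_hull (fun y hy ↦ (hT y hy).le) hz'
  refine (eq_zero_or_apply_pos_of_mem_hull hT hz).resolve_right fun hfz ↦ ?_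
  linarith [mul_nonpos_of_nonpos_of_nonneg hk hα]

lemma exists_dual_ne_zero_and_nonneg_of_pos {R : Set E} (hR : R.Finite) (l : Module.Dual 𝕜 E) :
    ∃ ρ : Module.Dual 𝕜 E, (∀ α ∈ R, α ≠ 0 → ρ α ≠ 0) ∧ ∀ α ∈ R, 0 < ρ α → 0 ≤ l α := by
  have : Finite (R \ {0} : Set E) := hR.sdiff
  obtain ⟨g, hg⟩ := Module.exists_dual_forall_apply_ne_zero (K := 𝕜)
    (fun α : (R \ {0} : Set E) ↦ (α : E)) fun α ↦ α.2.2
  obtain ⟨t, ht⟩ := (hR.image fun α ↦ |g α / l α|).bddAbove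
  have hlt {α : E} (hα : α ∈ R) (hl : l α ≠ 0) : |g α| < (t + 1) * |l α| := by
    rw [← div_lt_iff₀ (abs_pos.2 hl), ← abs_div]
    exact (ht ⟨α, hα, rfl⟩).trans_lt (lt_add_one t)
  have hpos {α : E} (hα : α ∈ R) (hl : 0 < l α) : 0 < (g + (t + 1) • l) α := by
    have := neg_lt_of_abs_lt (hlt hα hl.ne')
    rw [abs_of_pos hl] at this
    simpa using neg_lt_iff_pos_add.1 this
  have hneg {α : E} (hα : α ∈ R) (hl : l α < 0) : (g + (t + 1) • l) α < 0 := by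
    have := lt_of_abs_lt (hlt hα hl.ne)
    rw [abs_of_neg hl, mul_neg, lt_neg_iff_add_neg] at this
    simpa using this
  refine ⟨g + (t + 1) • l, fun α hα hα₀ ↦ ?_, fun α hα h ↦ not_lt.1 fun hl ↦ h.asymm (hneg hα hl)⟩
  rcases lt_trichotomy (l α) 0 with hl | hl | hl
  · exact (hneg hα hl).ne
  · simpa [hl] using hg ⟨α, hα, hα₀⟩
  · exact (hpos hα hl).ne'

end Field

/-! ### Simple systems of a functional -/

section Cone

variable {𝕜 E : Type*} [CommRing 𝕜] [LinearOrder 𝕜] [AddCommGroup E] [Module 𝕜 E]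

/-- The elements of `R` that are positive with respect to the linear functional `ρ`. -/
def posRoots (R : Set E) (ρ : Module.Dual 𝕜 E) : Set E := {β ∈ R | 0 < ρ β}

variable [IsStrictOrderedRing 𝕜]

/-- A simple system `M` for the positive elements of `R` with respect to `ρ`, encoded as an
irredundant set of generators of the convex cone which they span; linear independence, which
follows in a root system, is not part of the definition. -/
structure IsSimpleSystem (R : Set E) (ρ : Module.Dual 𝕜 E) (M : Set E) : Prop where
  subset_posRoots : M ⊆ posRoots R ρ
  posRoots_subset_hull : posRoots R ρ ⊆ PointedCone.hull 𝕜 M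
  notMem_hull_sdiff : ∀ α ∈ M, α ∉ PointedCone.hull 𝕜 (M \ {α})

namespace IsSimpleSystem

variable {R M : Set E} {ρ : Module.Dual 𝕜 E} {α : E}

lemma subset (hM : IsSimpleSystem R ρ M) : M ⊆ R := fun _ hα ↦ (hM.subset_posRoots hα).1

lemma apply_pos (hM : IsSimpleSystem R ρ M) (hα : α ∈ M) : 0 < ρ α := (hM.subset_posRoots hα).2

lemma ne_zero (hM : IsSimpleSystem R ρ M) (hα : α ∈ M) : α ≠ 0 := by
  rintro rfl
  simpa using hM.apply_pos hα

lemma exists_eq_smul_add_mem_hull (hM : IsSimpleSystem R ρ M) {β : E} (hα : α ∈ M)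
    (hβ : β ∈ posRoots R ρ) :
    ∃ a : 𝕜, 0 ≤ a ∧ ∃ z ∈ PointedCone.hull 𝕜 (M \ {α}), β = a • α + z := by
  have := hM.posRoots_subset_hull hβ
  rw [← Set.insert_sdiff_self_of_mem hα, SetLike.mem_coe, Submodule.mem_span_insert] at this
  obtain ⟨a, z, hz, rfl⟩ := this
  exact ⟨a, a.2, z, hz, rfl⟩

end IsSimpleSystem

lemma exists_isSimpleSystem {R : Set E} (hfin : R.Finite) (ρ : Module.Dual 𝕜 E) :
    ∃ M, IsSimpleSystem R ρ M := by
  have hP : {M | M ⊆ posRoots R ρ ∧ posRoots R ρ ⊆ PointedCone.hull 𝕜 M}.Finite :=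
    (hfin.subset (Set.sep_subset _ _)).finite_subsets.subset fun _ hM ↦ hM.1
  obtain ⟨M, ⟨hsub, hgen⟩, hmin⟩ := hP.exists_minimal ⟨_, subset_rfl, PointedCone.subset_hull⟩
  refine ⟨M, hsub, hgen, fun α hα hspan ↦ ?_⟩
  have hle : PointedCone.hull 𝕜 M ≤ PointedCone.hull 𝕜 (M \ {α}) := by
    rw [Submodule.span_le]
    intro β hβ
    by_cases h : β = α
    · exact h ▸ hspan
    · exact PointedCone.subset_hull ⟨hβ, h⟩
  have hM : M ⊆ M \ {α} := hmin ⟨Set.sdiff_subset.trans hsub, hgen.trans hle⟩ Set.sdiff_subset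
  exact (hM hα).2 rfl

end Cone

/-! ### Reflections and the groups they generate -/

lemma reflV_apply (α x : V) : reflV α x = x - ⟪x, coroot α⟫ • α := by
  unfold reflV
  split_ifs with h
  · simp [inner_self_eq_zero.1 h]
  · rw [Module.reflection_apply]; rfl

lemma reflV_eq_reflection (α : V) : reflV α = (ℝ ∙ α)ᗮ.reflection.toLinearEquiv := by
  ext x
  rw [reflV_apply, coroot, real_inner_smul_right, real_inner_comm α x, real_inner_self_eq_norm_sq,
    LinearIsometryEquiv.coe_toLinearEquiv, Submodule.reflection_orthogonal_apply,
    Submodule.reflection_singleton_apply]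
  simp only [RCLike.ofReal_real_eq_id, id_eq]
  module

lemma inner_reflV_reflV (α x y : V) : ⟪reflV α x, reflV α y⟫ = ⟪x, y⟫ := by
  simp [reflV_eq_reflection]

lemma reflV_apply_self (α : V) : reflV α α = -α := by
  rw [reflV_eq_reflection]
  exact Submodule.reflection_orthogonalComplement_singleton_eq_neg α

lemma reflV_reflV (α x : V) : reflV α (reflV α x) = x := by
  simp [reflV_eq_reflection]

lemma reflV_mul_self (α : V) : reflV α * reflV α = 1 :=
  LinearEquiv.ext (reflV_reflV α)

lemma reflV_inv (α : V) : (reflV α)⁻¹ = reflV α :=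
  inv_eq_of_mul_eq_one_left (reflV_mul_self α)

lemma reflV_zero : reflV (0 : V) = 1 := by
  ext x
  simp [reflV_apply]

lemma reflV_smul {c : ℝ} (hc : c ≠ 0) (α : V) : reflV (c • α) = reflV α := by
  simp only [reflV_eq_reflection, Submodule.span_singleton_smul_eq hc.isUnit]

lemma reflV_neg (α : V) : reflV (-α) = reflV α := by
  rw [← neg_one_smul ℝ α, reflV_smul (by norm_num)]

lemma reflV_map_eq_conj {g : V ≃ₗ[ℝ] V} (hg : ∀ x y, ⟪g x, g y⟫ = ⟪x, y⟫) (α : V) :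
    reflV (g α) = g * reflV α * g⁻¹ := by
  rw [eq_mul_inv_iff_mul_eq]
  ext x
  simp only [LinearEquiv.mul_apply, reflV_apply, coroot, real_inner_smul_right, hg, map_sub,
    map_smul]

lemma reflV_mem_weyl {R : Set V} {α : V} (hα : α ∈ R) : reflV α ∈ weyl R :=
  Subgroup.subset_closure ⟨α, hα, rfl⟩

lemma weyl_le {R : Set V} {H : Subgroup (V ≃ₗ[ℝ] V)} : weyl R ≤ H ↔ ∀ α ∈ R, reflV α ∈ H := by
  rw [weyl, Subgroup.closure_le]
  exact ⟨fun h α hα ↦ h ⟨α, hα, rfl⟩, by rintro h _ ⟨α, hα, rfl⟩; exact h α hα⟩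

lemma weyl_mono {R T : Set V} (h : R ⊆ T) : weyl R ≤ weyl T :=
  weyl_le.2 fun _ hα ↦ reflV_mem_weyl (h hα)

lemma weyl_induction_left {R : Set V} {p : (V ≃ₗ[ℝ] V) → Prop} (one : p 1)
    (mul_left : ∀ α ∈ R, ∀ w, p w → p (reflV α * w)) {w : V ≃ₗ[ℝ] V} (hw : w ∈ weyl R) : p w := by
  induction hw using Subgroup.closure_induction_left with
  | one => exact one
  | mul_left _ hx w _ ih =>
    obtain ⟨α, hα, rfl⟩ := hx
    exact mul_left α hα w ih
  | inv_mul_cancel _ hx w _ ih =>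
    obtain ⟨α, hα, rfl⟩ := hx
    exact reflV_inv α ▸ mul_left α hα w ih

lemma inner_map_map_of_mem_weyl {R : Set V} {w : V ≃ₗ[ℝ] V} (hw : w ∈ weyl R) (x y : V) :
    ⟪w x, w y⟫ = ⟪x, y⟫ :=
  weyl_induction_left (p := fun w ↦ ⟪w x, w y⟫ = ⟪x, y⟫) rfl
    (fun α _ w ih ↦ by simpa only [LinearEquiv.mul_apply, inner_reflV_reflV] using ih) hw

lemma apply_map_of_mem_weyl {R : Set V} {l : Module.Dual ℝ V} (hl : ∀ α ∈ R, l α = 0)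
    {w : V ≃ₗ[ℝ] V} (hw : w ∈ weyl R) (x : V) : l (w x) = l x :=
  weyl_induction_left (p := fun w ↦ l (w x) = l x) rfl
    (fun α hα w ih ↦ by simp [reflV_apply, hl α hα, ih]) hw

lemma exists_list_of_mem_weyl {R : Set V} {w : V ≃ₗ[ℝ] V} (hw : w ∈ weyl R) :
    ∃ L : List V, (∀ α ∈ L, α ∈ R) ∧ (L.map reflV).prod = w := by
  refine weyl_induction_left
    (p := fun w ↦ ∃ L : List V, (∀ α ∈ L, α ∈ R) ∧ (L.map reflV).prod = w) ⟨[], by simp, rfl⟩ ?_ hw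
  rintro α hα _ ⟨L, hL, rfl⟩
  exact ⟨α :: L, List.forall_mem_cons.2 ⟨hα, hL⟩, by simp⟩

lemma prod_map_reflV_mem_weyl {R : Set V} {L : List V} (hL : ∀ α ∈ L, α ∈ R) :
    (L.map reflV).prod ∈ weyl R :=
  Subgroup.list_prod_mem _ <| List.forall_mem_map.2 fun α hα ↦ reflV_mem_weyl (hL α hα)

/-- Stability of a set of vectors under the reflections in its own members: the weak form of a root
system for which simple systems are considered here. Neither integrality nor reducedness is part of
the definition, and the zero vector is allowed. -/
def IsReflStable (R : Set V) : Prop := ∀ α ∈ R, ∀ β ∈ R, reflV α β ∈ R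

namespace IsReflStable

variable {R : Set V} (hR : IsReflStable R)
include hR

lemma neg_mem {α : V} (hα : α ∈ R) : -α ∈ R := reflV_apply_self α ▸ hR α hα α hα

lemma map_mem_of_mem_weyl {w : V ≃ₗ[ℝ] V} (hw : w ∈ weyl R) {β : V} (hβ : β ∈ R) : w β ∈ R :=
  weyl_induction_left (p := fun w ↦ w β ∈ R) hβ (fun α hα _ ih ↦ hR α hα _ ih) hw

lemma apply_map_ne_zero {ρ : Module.Dual ℝ V} (hρ : ∀ α ∈ R, α ≠ 0 → ρ α ≠ 0) {w : V ≃ₗ[ℝ] V}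
    (hw : w ∈ weyl R) {β : V} (hβ : β ∈ R) (hβ₀ : β ≠ 0) : ρ (w β) ≠ 0 :=
  hρ _ (hR.map_mem_of_mem_weyl hw hβ) (w.map_ne_zero_iff.2 hβ₀)

end IsReflStable

/-! ### Simple systems of reflection-stable sets -/

namespace IsSimpleSystem

variable {R M : Set V} {ρ : Module.Dual ℝ V} (hM : IsSimpleSystem R ρ M)
include hM

omit [FiniteDimensional ℝ V] in
lemma exists_inner_coroot_pos {β : V} (hβ : β ∈ posRoots R ρ) :
    ∃ α ∈ M, 0 < ⟪β, coroot α⟫ := by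
  by_contra! h
  have hobtuse : ∀ α ∈ M, 0 ≤ (-innerₗ V β) α := by
    intro α hα
    have := h α hα
    rw [coroot, real_inner_smul_right] at this
    simpa using nonpos_of_mul_nonpos_right this
      (div_pos two_pos (real_inner_self_pos.2 (hM.ne_zero hα)))
  have hβ₀ := apply_nonneg_of_mem_hull hobtuse (hM.posRoots_subset_hull hβ)
  have : β = 0 := by simpa using hβ₀
  simpa [this] using hβ.2

/-- Splitting off from `β` and `-s_α β` their multiples of `α` leaves two vectors of the cone
spanned by the other simple elements whose sum is a multiple of `α`; as `α` is irredundant, this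
multiple is not positive, so both vanish. -/
lemma exists_eq_smul_of_apply_reflV_neg (hR : IsReflStable R) {α β : V} (hα : α ∈ M)
    (hβ : β ∈ posRoots R ρ) (hneg : ρ (reflV α β) < 0) : ∃ c : ℝ, 0 < c ∧ β = c • α := by
  have hβ' : -reflV α β ∈ posRoots R ρ :=
    ⟨hR.neg_mem (hR α (hM.subset hα) β hβ.1), by simpa using hneg⟩
  obtain ⟨a, ha, z, hz, hβz⟩ := hM.exists_eq_smul_add_mem_hull hα hβ
  obtain ⟨b, -, z', hz', hβz'⟩ := hM.exists_eq_smul_add_mem_hull hα hβ'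
  have hsum : z + z' = (⟪β, coroot α⟫ - a - b) • α := by
    rw [← sub_eq_iff_eq_add'.2 hβz, ← sub_eq_iff_eq_add'.2 hβz', reflV_apply]
    module
  have hz₀ : z = 0 := eq_zero_of_add_eq_smul_of_notMem_hull (fun γ hγ ↦ hM.apply_pos hγ.1)
    (hM.apply_pos hα).le (hM.notMem_hull_sdiff α hα) hz hz' hsum
  rw [hz₀, add_zero] at hβz
  refine ⟨a, ha.lt_of_ne ?_, hβz⟩
  rintro rfl
  simpa [hβz] using hβ.2

lemma posRoots_induction (hfin : R.Finite) (hR : IsReflStable R)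
    (hρ : ∀ α ∈ R, α ≠ 0 → ρ α ≠ 0) {p : V → Prop}
    (smul : ∀ α ∈ M, ∀ c : ℝ, 0 < c → c • α ∈ R → p (c • α))
    (reflect : ∀ α ∈ M, ∀ β ∈ posRoots R ρ, 0 < ⟪β, coroot α⟫ →
      reflV α β ∈ posRoots R ρ → p (reflV α β) → p β) :
    ∀ β ∈ posRoots R ρ, p β := by
  by_contra! h
  obtain ⟨β, ⟨hβ, hpβ⟩, hmin⟩ := Set.exists_min_image {β ∈ posRoots R ρ | ¬ p β} ρ
    (hfin.subset fun _ h ↦ h.1.1) h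
  obtain ⟨α, hα, hαβ⟩ := hM.exists_inner_coroot_pos hβ
  have hmem : reflV α β ∈ R := hR α (hM.subset hα) β hβ.1
  have hβ₀ : β ≠ 0 := by rintro rfl; simpa using hβ.2
  rcases (hρ _ hmem ((reflV α).map_ne_zero_iff.2 hβ₀)).lt_or_gt with hneg | hpos
  · obtain ⟨c, hc, rfl⟩ := hM.exists_eq_smul_of_apply_reflV_neg hR hα hβ hneg
    exact hpβ (smul α hα c hc hβ.1)
  · have hlt : ρ (reflV α β) < ρ β := by
      simpa [reflV_apply] using mul_pos hαβ (hM.apply_pos hα)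
    refine hpβ (reflect α hα β hβ hαβ ⟨hmem, hpos⟩ (not_not.1 fun h ↦ ?_))
    exact hlt.not_ge (hmin _ ⟨⟨hmem, hpos⟩, h⟩)

lemma weyl_le_weyl (hfin : R.Finite) (hR : IsReflStable R)
    (hρ : ∀ α ∈ R, α ≠ 0 → ρ α ≠ 0) : weyl R ≤ weyl M := by
  have hpos : ∀ β ∈ posRoots R ρ, reflV β ∈ weyl M := by
    refine hM.posRoots_induction hfin hR hρ ?_ ?_
    · intro α hα c hc _
      exact reflV_smul hc.ne' α ▸ reflV_mem_weyl hα
    · intro α hα β _ _ _ ih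
      have hs := reflV_mem_weyl hα
      rw [reflV_map_eq_conj (inner_reflV_reflV α)] at ih
      simpa [mul_assoc] using mul_mem (mul_mem (inv_mem hs) ih) hs
  refine weyl_le.2 fun α hα ↦ ?_
  rcases eq_or_ne α 0 with rfl | hα₀
  · exact reflV_zero (V := V) ▸ one_mem _
  rcases (hρ α hα hα₀).lt_or_gt with h | h
  · exact reflV_neg α ▸ hpos (-α) ⟨hR.neg_mem hα, by simpa using h⟩
  · exact hpos α ⟨hα, h⟩

lemma exists_length_lt_of_apply_prod_neg (hR : IsReflStable R) (hρ : ∀ α ∈ R, α ≠ 0 → ρ α ≠ 0)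
    {α : V} (hα : α ∈ M) {L : List V} (hL : ∀ β ∈ L, β ∈ M)
    (hneg : ρ ((L.map reflV).prod α) < 0) :
    ∃ L' : List V, (∀ β ∈ L', β ∈ M) ∧ L'.length < L.length ∧
      (L'.map reflV).prod = (L.map reflV).prod * reflV α := by
  induction L with
  | nil => exact absurd hneg (hM.apply_pos hα).not_gt
  | cons β L ih =>
    obtain ⟨hβ, hL⟩ := List.forall_mem_cons.1 hL
    rw [List.map_cons, List.prod_cons] at hneg ⊢
    set w := (L.map reflV).prod
    have hw : w ∈ weyl R := weyl_mono hM.subset (prod_map_reflV_mem_weyl hL)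
    rcases (hR.apply_map_ne_zero hρ hw (hM.subset hα) (hM.ne_zero hα)).lt_or_gt with h | h
    · obtain ⟨L', hL', hlen, hprod⟩ := ih hL h
      refine ⟨β :: L', List.forall_mem_cons.2 ⟨hβ, hL'⟩, by simpa using hlen, ?_⟩
      rw [List.map_cons, List.prod_cons, hprod, mul_assoc]
    · obtain ⟨c, hc, hwα⟩ := hM.exists_eq_smul_of_apply_reflV_neg hR hβ
        ⟨hR.map_mem_of_mem_weyl hw (hM.subset hα), h⟩ hneg
      refine ⟨L, hL, by simp, ?_⟩
      have hconj : reflV β = w * reflV α * w⁻¹ := by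
        rw [← reflV_map_eq_conj (inner_map_map_of_mem_weyl hw), hwα, reflV_smul hc.ne']
      rw [hconj, inv_mul_cancel_right, mul_assoc, reflV_mul_self, mul_one]

lemma prod_map_reflV_mem_weyl_ker (hR : IsReflStable R) (hρ : ∀ α ∈ R, α ≠ 0 → ρ α ≠ 0)
    {l : Module.Dual ℝ V} (hl : ∀ β ∈ R, 0 < ρ β → 0 ≤ l β) (L : List V) (hL : ∀ α ∈ L, α ∈ M)
    (hfix : ∀ x, l ((L.map reflV).prod x) = l x) :
    (L.map reflV).prod ∈ weyl {α ∈ R | l α = 0} := by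
  induction hn : L.length using Nat.strong_induction_on generalizing L with
  | _ n ih =>
  rcases L.eq_nil_or_concat' with rfl | ⟨L, α, rfl⟩
  · simp
  simp only [List.forall_mem_append, List.forall_mem_singleton] at hL
  obtain ⟨hL, hα⟩ := hL
  simp only [List.map_append, List.map_singleton, List.prod_append, List.prod_singleton,
    List.length_append, List.length_singleton] at hfix hn ⊢
  set w := (L.map reflV).prod
  have hw : w ∈ weyl R := weyl_mono hM.subset (prod_map_reflV_mem_weyl hL)
  rcases (hR.apply_map_ne_zero hρ hw (hM.subset hα) (hM.ne_zero hα)).lt_or_gt with h | h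
  · obtain ⟨L', hL', hlen, hprod⟩ := hM.exists_length_lt_of_apply_prod_neg hR hρ hα hL h
    rw [← hprod] at hfix ⊢
    exact ih _ (by lia) L' hL' hfix rfl
  · have hlα : l α = 0 := by
      have hwα := hl _ (hR.map_mem_of_mem_weyl hw (hM.subset hα)) h
      have hαfix : l (w α) = -l α := by
        simpa [reflV_apply_self, neg_eq_iff_eq_neg] using hfix α
      linarith [hl α (hM.subset hα) (hM.apply_pos hα)]
    have hwfix (x : V) : l (w x) = l x := by
      have := hfix (reflV α x)
      rw [LinearEquiv.mul_apply, reflV_reflV] at this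
      simpa [reflV_apply, hlα] using this
    exact mul_mem (ih _ (by lia) L hL hwfix rfl) (reflV_mem_weyl ⟨hM.subset hα, hlα⟩)

end IsSimpleSystem

theorem IsReflStable.mem_weyl_ker_iff {R : Set V} (hfin : R.Finite) (hR : IsReflStable R)
    (l : Module.Dual ℝ V) {w : V ≃ₗ[ℝ] V} :
    w ∈ weyl {α ∈ R | l α = 0} ↔ w ∈ weyl R ∧ ∀ x, l (w x) = l x := by
  refine ⟨fun hw ↦ ⟨weyl_mono (Set.sep_subset _ _) hw, apply_map_of_mem_weyl (fun _ h ↦ h.2) hw⟩,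
    fun ⟨hw, hfix⟩ ↦ ?_⟩
  obtain ⟨ρ, hρ, hl⟩ := exists_dual_ne_zero_and_nonneg_of_pos hfin l
  obtain ⟨M, hM⟩ := exists_isSimpleSystem hfin ρ
  obtain ⟨L, hL, rfl⟩ := exists_list_of_mem_weyl (hM.weyl_le_weyl hfin hR hρ hw)
  exact hM.prod_map_reflV_mem_weyl_ker hR hρ hl L hL hfix

/-! ### Parabolic subsystems -/

namespace RootSys

variable (S : RootSys V)

lemma exists_dual_eqOn_simple (g : V → ℝ) : ∃ f : Module.Dual ℝ V, ∀ α ∈ S.Δ, f α = g α := by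
  let b := Module.Basis.span S.simple_indep
  obtain ⟨f, hf⟩ := LinearMap.exists_extend (b.constr ℝ fun α ↦ g α)
  refine ⟨f, fun α hα ↦ ?_⟩
  have hb : f (b ⟨α, hα⟩) = g α := by
    simpa only [LinearMap.comp_apply, Submodule.subtype_apply, Module.Basis.constr_basis] using
      LinearMap.congr_fun hf (b ⟨α, hα⟩)
  rwa [Module.Basis.span_apply] at hb

lemma pos_subset_hull : (S.pos : Set V) ⊆ PointedCone.hull ℝ (S.Δ : Set V) := by
  intro β hβ
  obtain ⟨c, hc, rfl⟩ := S.simple_gen β hβ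
  exact Submodule.sum_mem _ fun α hα ↦ PointedCone.smul_mem _ (hc α hα)
    (PointedCone.subset_hull hα)

lemma notMem_hull_sdiff_of_mem_simple {α : V} (hα : α ∈ S.Δ) :
    α ∉ PointedCone.hull ℝ ((S.Δ : Set V) \ {α}) := by
  have hli : LinearIndepOn ℝ id (S.Δ : Set V) := S.simple_indep
  exact fun h ↦ hli.notMem_span hα (by simpa using PointedCone.hull_le_span _ _ h)

lemma posRoots_eq_pos {ρ : Module.Dual ℝ V} (hρ : ∀ α ∈ S.Δ, 0 < ρ α) :
    posRoots (S.Φ : Set V) ρ = S.pos := by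
  have hpos {β : V} (hβ : β ∈ S.pos) : 0 < ρ β :=
    (eq_zero_or_apply_pos_of_mem_hull hρ (S.pos_subset_hull hβ)).resolve_left
      (S.ne_zero β (S.pos_subset hβ))
  ext β
  refine ⟨fun ⟨hβ, h⟩ ↦ (S.mem_pos_or β hβ).resolve_right fun hneg ↦ ?_,
    fun hβ ↦ ⟨S.pos_subset hβ, hpos hβ⟩⟩
  exact h.not_gt (by simpa using hpos hneg)

lemma isSimpleSystem_simple {ρ : Module.Dual ℝ V} (hρ : ∀ α ∈ S.Δ, 0 < ρ α) :
    IsSimpleSystem (S.Φ : Set V) ρ (S.Δ : Set V) where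
  subset_posRoots := S.posRoots_eq_pos hρ ▸ S.simple_subset
  posRoots_subset_hull := S.posRoots_eq_pos hρ ▸ S.pos_subset_hull
  notMem_hull_sdiff _ hα := S.notMem_hull_sdiff_of_mem_simple hα

lemma pos_induction {p : V → Prop} (simple : ∀ α ∈ S.Δ, p α)
    (reflect : ∀ α ∈ S.Δ, ∀ β ∈ S.pos, 0 < ⟪β, coroot α⟫ → reflV α β ∈ S.pos →
      p (reflV α β) → p β) :
    ∀ β ∈ S.pos, p β := by
  obtain ⟨ρ, hρΔ⟩ := S.exists_dual_eqOn_simple 1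
  have hρ : ∀ α ∈ S.Δ, 0 < ρ α := fun α hα ↦ hρΔ α hα ▸ one_pos
  have hpos : posRoots (S.Φ : Set V) ρ = S.pos := S.posRoots_eq_pos hρ
  have hρ₀ : ∀ α ∈ (S.Φ : Set V), α ≠ 0 → ρ α ≠ 0 := by
    intro α hα _
    rcases S.mem_pos_or α hα with h | h
    · exact (hpos.ge h).2.ne'
    · simpa using (hpos.ge h).2.ne'
  intro β hβ
  refine (S.isSimpleSystem_simple hρ).posRoots_induction S.Φ.finite_toSet S.refl_mem hρ₀ ?_ ?_ β
    (hpos.ge hβ)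
  · intro α hα c hc hcα
    rcases S.reduced α (S.pos_subset (S.simple_subset hα)) c hcα with rfl | rfl
    · exact (one_smul ℝ α).symm ▸ simple α hα
    · exact absurd hc (by norm_num)
  · intro α hα γ hγ hαγ hsγ
    exact reflect α hα γ (hpos.le hγ) hαγ (hpos.le hsγ)

lemma mem_span_int_simple_ker {l : Module.Dual ℝ V} (hl : ∀ α ∈ S.Δ, 0 ≤ l α) {β : V}
    (hβ : β ∈ S.Φ) (hlβ : l β = 0) : β ∈ Submodule.span ℤ {α ∈ (S.Δ : Set V) | l α = 0} := by
  have key : ∀ β ∈ S.pos, l β = 0 → β ∈ Submodule.span ℤ {α ∈ (S.Δ : Set V) | l α = 0} := by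
    refine S.pos_induction (fun α hα hlα ↦ Submodule.subset_span ⟨hα, hlα⟩) ?_
    intro α hα γ hγ hαγ hsγ ih hlγ
    have hlα : l α = 0 := by
      have := apply_nonneg_of_mem_hull hl (S.pos_subset_hull hsγ)
      rw [reflV_apply, map_sub, map_smul, hlγ, zero_sub, neg_nonneg] at this
      exact (nonpos_of_mul_nonpos_right this hαγ).antisymm (hl α hα)
    obtain ⟨n, hn⟩ := S.crystallographic α (S.pos_subset (S.simple_subset hα)) γ
      (S.pos_subset hγ)
    have hγ_eq : γ = reflV α γ + n • α := by
      rw [reflV_apply, hn, Int.cast_smul_eq_zsmul, sub_add_cancel]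
    rw [hγ_eq]
    exact add_mem (ih (by simp [reflV_apply, hlγ, hlα]))
      (Submodule.smul_mem _ n (Submodule.subset_span ⟨hα, hlα⟩))
  rcases S.mem_pos_or β hβ with h | h
  · exact key β h hlβ
  · simpa using key (-β) h (by simp [hlβ])

lemma exists_dual_phiI_eq {I : Finset V} (hI : I ⊆ S.Δ) :
    ∃ l : Module.Dual ℝ V, PhiI S I = {α ∈ (S.Φ : Set V) | l α = 0} := by
  obtain ⟨l, hl⟩ := S.exists_dual_eqOn_simple fun α ↦ if α ∈ I then 0 else 1
  have hspan : Submodule.span ℤ (I : Set V) ≤ l.toAddMonoidHom.toIntLinearMap.ker :=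
    Submodule.span_le.2 fun α hα ↦ (hl α (hI hα)).trans (if_pos hα)
  have hker : {α ∈ (S.Δ : Set V) | l α = 0} ⊆ (I : Set V) := fun α ⟨hα, h⟩ ↦ by
    simpa [hl α hα] using h
  refine ⟨l, Set.sep_ext_iff.2 fun β hβ ↦ ⟨@hspan β, fun h ↦ ?_⟩⟩
  refine Submodule.span_mono hker (S.mem_span_int_simple_ker (fun α hα ↦ ?_) hβ h)
  rw [hl α hα]
  split_ifs <;> norm_num

end RootSys

/-- Lemma 4.13: for `I ⊆ Δ` and a subsystem `Φ'` of `Φ`,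
`W_I ∩ W(Φ') = W(Φ_I ∩ Φ')`. -/
theorem statement_12 {V : Type*} [NormedAddCommGroup V] [InnerProductSpace ℝ V]
    [FiniteDimensional ℝ V]
    (S : RootSys V) (I : Finset V) (hI : I ⊆ S.Δ)
    (Φ' : Set V) (hsub : IsSubsystem S Φ') :
    weyl (PhiI S I) ⊓ weyl Φ' = weyl (PhiI S I ∩ Φ') := by
  obtain ⟨l, hl⟩ := S.exists_dual_phiI_eq hI
  have hinter : PhiI S I ∩ Φ' = {α ∈ Φ' | l α = 0} := by
    rw [hl]
    exact Set.ext fun α ↦ ⟨fun ⟨⟨_, h⟩, hα⟩ ↦ ⟨hα, h⟩, fun ⟨hα, h⟩ ↦ ⟨⟨hsub.1 hα, h⟩, hα⟩⟩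
  ext w
  rw [Subgroup.mem_inf, hinter, hl,
    IsReflStable.mem_weyl_ker_iff S.Φ.finite_toSet S.refl_mem,
    IsReflStable.mem_weyl_ker_iff (S.Φ.finite_toSet.subset hsub.1) hsub.2]
  exact ⟨fun ⟨⟨_, hfix⟩, hw⟩ ↦ ⟨hw, hfix⟩, fun ⟨hw, hfix⟩ ↦ ⟨⟨weyl_mono hsub.1 hw, hfix⟩, hw⟩⟩

end JantzenGVM
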